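/- arXiv:1811.11360 — 3 statements merged into one kernel-verified Lean document; each statement's English description precedes it below -/
import Mathlib

section
/- If 1 > p₁ > p₂ > 0 and α > 0, then N_{α,p₁} ≤_conv N_{α,p₂}: setting p = p₂/p₁ and L = N_{α,p}, the variable N_{α,p₂} is distributed as N_{α,p₁} + (L + N_{L,p₁}), where L + N_{L,p₁} is nonnegative and independent of N_{α,p₁}. -/
open MeasureTheory ProbabilityTheory Real

/-- The negative binomial probability mass function with shape `α` and success probability `p`. -/
noncomputable def negBinomPMF (α p : ℝ) (k : ℕ) : ℝ :=
  Real.Gamma (k + α) / (Nat.factorial k * Real.Gamma α) * p ^ α * (1 - p) ^ k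

/-- The negative binomial distribution as a measure on `ℝ` supported on `ℕ`. -/
noncomputable def negBinomMeasure (α p : ℝ) : Measure ℝ :=
  Measure.sum fun k : ℕ => ENNReal.ofReal (negBinomPMF α p k) • Measure.dirac (k : ℝ)

/-- Convolution order: `ν` equals `μ` convolved with some nonnegative probability measure. -/
def ConvLE (μ ν : Measure ℝ) : Prop :=
  ∃ ρ : Measure ℝ, IsProbabilityMeasure ρ ∧ ρ (Set.Iio 0) = 0 ∧ ν = μ.conv ρ

/-- Usual stochastic order on measures. -/
def StochLE (μ ν : Measure ℝ) : Prop := ∀ t : ℝ, μ (Set.Ici t) ≤ ν (Set.Ici t)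

lemma mc_succ (a : ℝ) (k : ℕ) :
    (k + 1 : ℝ) * Ring.multichoose a (k + 1) = Ring.multichoose a k * (a + k) := by
  have h1 := Ring.factorial_nsmul_multichoose_eq_ascPochhammer a (k + 1)
  have h0 := Ring.factorial_nsmul_multichoose_eq_ascPochhammer a k
  rw [Polynomial.ascPochhammer_smeval_eq_eval] at h0 h1
  rw [ascPochhammer_succ_eval, ← h0] at h1
  simp only [nsmul_eq_mul, Nat.factorial_succ, Nat.cast_mul, Nat.cast_add, Nat.cast_one] at h1
  have hf : (k.factorial : ℝ) ≠ 0 := by positivity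
  apply mul_left_cancel₀ hf
  linear_combination h1

lemma mc_nonneg {a : ℝ} (ha : 0 ≤ a) (k : ℕ) : 0 ≤ Ring.multichoose a k := by
  induction k with
  | zero => simp
  | succ k ih =>
    have h := mc_succ a k
    have h2 : 0 ≤ Ring.multichoose a k * (a + k) := by positivity
    rw [← h] at h2
    exact nonneg_of_mul_nonneg_right h2 (by positivity)

lemma mc_gamma {a : ℝ} (ha : 0 < a) (k : ℕ) :
    Real.Gamma (k + a) = Ring.multichoose a k * (Nat.factorial k * Real.Gamma a) := by
  induction k with
  | zero => simp
  | succ k ih =>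
    have h : ((k + 1 : ℕ) : ℝ) + a = (k + a) + 1 := by push_cast; ring
    rw [h, Real.Gamma_add_one (by positivity), ih, Nat.factorial_succ]
    push_cast
    linear_combination (-(k.factorial * Real.Gamma a)) * mc_succ a k

lemma pmf_eq {a : ℝ} (ha : 0 < a) (p : ℝ) (k : ℕ) :
    negBinomPMF a p k = Ring.multichoose a k * p ^ a * (1 - p) ^ k := by
  have := (Real.Gamma_pos_of_pos ha).ne'
  rw [negBinomPMF, mc_gamma ha, mul_div_cancel_right₀]
  positivity

lemma mc_add (a b : ℝ) (n : ℕ) :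
    ∑ x ∈ Finset.HasAntidiagonal.antidiagonal n, Ring.multichoose a x.1 * Ring.multichoose b x.2
      = Ring.multichoose (a + b) n := by
  have h := Ring.add_choose_eq n (Commute.all (-a) (-b))
  rw [← neg_add] at h
  simp only [Ring.choose_neg', Units.smul_def, zsmul_eq_mul, Int.coe_negOnePow_natCast] at h
  push_cast at h
  have h3 : ∑ x ∈ Finset.HasAntidiagonal.antidiagonal n, (-1 : ℝ) ^ x.1 * Ring.multichoose a x.1 *
      ((-1) ^ x.2 * Ring.multichoose b x.2) = (-1) ^ n *
      ∑ x ∈ Finset.HasAntidiagonal.antidiagonal n, Ring.multichoose a x.1 * Ring.multichoose b x.2 := by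
    rw [Finset.mul_sum]
    refine Finset.sum_congr rfl fun x hx => ?_
    rw [← Finset.HasAntidiagonal.mem_antidiagonal.1 hx, pow_add]
    ring
  rw [h3] at h
  exact (mul_left_cancel₀ (pow_ne_zero _ (by norm_num)) h).symm

lemma mc_mul {a : ℝ} (ha : 0 < a) (l j : ℕ) :
    Ring.multichoose a l * Ring.multichoose (a + l) j
      = Ring.multichoose a (j + l) * (Nat.choose (j + l) j : ℝ) := by
  have h1 := mc_gamma ha l
  have h2 := mc_gamma (a := a + l) (by positivity) j
  have h3 := mc_gamma ha (j + l)
  rw [show a + (l : ℝ) = l + a by ring] at h2 ⊢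
  rw [show (j : ℝ) + (l + a) = ((j + l : ℕ) : ℝ) + a by push_cast; ring, h1, h3] at h2
  have hc : ((Nat.choose (j + l) j : ℝ)) * j.factorial * l.factorial = (j + l).factorial := by
    rw [Nat.choose_symm_add]
    exact_mod_cast Nat.add_choose_mul_factorial_mul_factorial j l
  have hg := (Real.Gamma_pos_of_pos ha).ne'
  rw [← hc] at h2
  have : (j.factorial : ℝ) * l.factorial * Real.Gamma a ≠ 0 := by positivity
  apply mul_right_cancel₀ this
  linear_combination -h2

lemma mass_one {a p : ℝ} (ha : 0 < a) (hp : 0 < p) (hp1 : p < 1) :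
    HasSum (negBinomPMF a p) 1 := by
  have h := (Real.one_div_one_sub_rpow_hasFPowerSeriesOnBall_zero a).hasSum
    (y := 1 - p) (by
      rw [← ENNReal.ofReal_one, Metric.mem_eball, edist_dist, Real.dist_eq]
      apply (ENNReal.ofReal_lt_ofReal_iff one_pos).2
      rw [abs_lt]; constructor <;> linarith)
  have hpa : p ^ a ≠ 0 := (Real.rpow_pos_of_pos hp a).ne'
  have h' := h.mul_left (p ^ a)
  convert! h' using 1
  · ext k
    rw [pmf_eq ha, Ring.multichoose_eq]
    simp [FormalMultilinearSeries.ofScalars]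
    ring
  · simp [hpa]

/-- mass function of `L + N_{L,p₁}` -/
noncomputable def rr (a p p1 : ℝ) (n : ℕ) : ℝ :=
  ∑ x ∈ Finset.HasAntidiagonal.antidiagonal n, Ring.multichoose (x.2 : ℝ) x.1 * p1 ^ x.2 * (1 - p1) ^ x.1 *
    (Ring.multichoose a x.2 * p ^ a * (1 - p) ^ x.2)

lemma triple (n : ℕ) (F : ℕ → ℕ → ℕ → ℝ) :
    ∑ x ∈ Finset.HasAntidiagonal.antidiagonal n,
      ∑ y ∈ Finset.HasAntidiagonal.antidiagonal x.2, F x.1 y.1 y.2 =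
    ∑ x ∈ Finset.HasAntidiagonal.antidiagonal n,
      ∑ y ∈ Finset.HasAntidiagonal.antidiagonal x.1, F y.1 y.2 x.2 := by
  rw [Finset.sum_sigma', Finset.sum_sigma']
  refine Finset.sum_nbij' (fun z => ⟨(z.1.1 + z.2.1, z.2.2), (z.1.1, z.2.1)⟩)
    (fun z => ⟨(z.2.1, z.2.2 + z.1.2), (z.2.2, z.1.2)⟩) ?_ ?_ ?_ ?_ ?_
  · rintro ⟨⟨a, b⟩, ⟨c, d⟩⟩ h
    simp at h ⊢
    omega
  · rintro ⟨⟨a, b⟩, ⟨c, d⟩⟩ h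
    simp at h ⊢
    omega
  · rintro ⟨⟨a, b⟩, ⟨c, d⟩⟩ h
    simp at h
    obtain ⟨h, rfl⟩ := h
    rfl
  · rintro ⟨⟨a, b⟩, ⟨c, d⟩⟩ h
    simp at h
    obtain ⟨h, rfl⟩ := h
    rfl
  · rintro ⟨⟨a, b⟩, ⟨c, d⟩⟩ h
    rfl

lemma key {a p p1 : ℝ} (ha : 0 < a) (hp : 0 < p) (hp1 : 0 < p1) (n : ℕ) :
    ∑ x ∈ Finset.HasAntidiagonal.antidiagonal n, negBinomPMF a p1 x.1 * rr a p p1 x.2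
      = negBinomPMF a (p * p1) n := by
  simp only [rr, Finset.mul_sum]
  rw [triple n fun k m l => negBinomPMF a p1 k *
    (Ring.multichoose (l : ℝ) m * p1 ^ l * (1 - p1) ^ m *
      (Ring.multichoose a l * p ^ a * (1 - p) ^ l))]
  have e : 1 - p * p1 = (1 - p1) + (1 - p) * p1 := by ring
  rw [pmf_eq ha, e, (Commute.all _ _).add_pow', Finset.mul_sum]
  refine Finset.sum_congr rfl fun x hx => ?_
  have hx := Finset.HasAntidiagonal.mem_antidiagonal.1 hx
  have hm := mc_mul ha x.2 x.1
  rw [hx] at hm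
  have hs : (∑ y ∈ Finset.HasAntidiagonal.antidiagonal x.1, negBinomPMF a p1 y.1 *
      (Ring.multichoose (x.2 : ℝ) y.2 * p1 ^ x.2 * (1 - p1) ^ y.2 *
        (Ring.multichoose a x.2 * p ^ a * (1 - p) ^ x.2))) =
      Ring.multichoose (a + x.2) x.1 * (p1 ^ a * p1 ^ x.2 * (1 - p1) ^ x.1 *
        (Ring.multichoose a x.2 * p ^ a * (1 - p) ^ x.2)) := by
    rw [← mc_add, Finset.sum_mul]
    refine Finset.sum_congr rfl fun y hy => ?_
    rw [pmf_eq ha, ← Finset.HasAntidiagonal.mem_antidiagonal.1 hy, pow_add]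
    ring
  rw [hs, Real.mul_rpow hp.le hp1.le, nsmul_eq_mul, mul_pow]
  linear_combination (p1 ^ a * p1 ^ x.2 * (1 - p1) ^ x.1 * p ^ a * (1 - p) ^ x.2) * hm

lemma conv_eq (f g h : ℕ → ℝ) (hf : ∀ n, 0 ≤ f n) (hg : ∀ n, 0 ≤ g n)
    (H : ∀ n, ∑ x ∈ Finset.HasAntidiagonal.antidiagonal n, f x.1 * g x.2 = h n) :
    (Measure.sum fun k : ℕ => ENNReal.ofReal (h k) • Measure.dirac (k : ℝ)) =
    (Measure.sum fun k : ℕ => ENNReal.ofReal (f k) • Measure.dirac (k : ℝ)).conv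
      (Measure.sum fun k : ℕ => ENNReal.ofReal (g k) • Measure.dirac (k : ℝ)) := by
  refine Measure.ext_of_lintegral _ fun F hF => ?_
  rw [Measure.lintegral_conv hF]
  simp only [lintegral_sum_measure, lintegral_smul_measure, lintegral_dirac, smul_eq_mul]
  simp only [← ENNReal.tsum_mul_left]
  rw [← ENNReal.tsum_prod (f := fun i j : ℕ => ENNReal.ofReal (f i) *
    (ENNReal.ofReal (g j) * F (i + j))),
    ← Finset.HasAntidiagonal.sigmaAntidiagonalEquivProd.tsum_eq, ENNReal.tsum_sigma']
  refine tsum_congr fun n => ?_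
  rw [tsum_fintype, ← H n, ENNReal.ofReal_sum_of_nonneg
    (fun x _ => mul_nonneg (hf _) (hg _)), Finset.sum_mul, ← Finset.sum_coe_sort]
  refine Finset.sum_congr rfl fun x _ => ?_
  have hx := Finset.HasAntidiagonal.mem_antidiagonal.1 x.2
  simp only [Finset.HasAntidiagonal.sigmaAntidiagonalEquivProd_apply]
  rw [ENNReal.ofReal_mul (hf _), mul_assoc]
  have hx' : (n : ℝ) = (x.1.1 : ℝ) + (x.1.2 : ℝ) := by exact_mod_cast hx.symm
  rw [hx']

lemma nb_prob {a p : ℝ} (ha : 0 < a) (hp : 0 < p) (hp1 : p < 1) :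
    negBinomMeasure a p Set.univ = 1 := by
  have h := mass_one ha hp hp1
  have h0 : ∀ k, 0 ≤ negBinomPMF a p k := fun k => by
    rw [pmf_eq ha]
    have := mc_nonneg ha.le k
    have : 0 ≤ 1 - p := by linarith
    positivity
  simp only [negBinomMeasure, Measure.sum_apply _ MeasurableSet.univ, Measure.smul_apply,
    measure_univ, smul_eq_mul, mul_one]
  rw [← ENNReal.ofReal_tsum_of_nonneg h0 h.summable, h.tsum_eq, ENNReal.ofReal_one]

/-- Convolution order for negative binomials in the success probability. -/
theorem negBinom_prob_conv_order (α p₁ p₂ : ℝ) (hα : 0 < α) (h2 : 0 < p₂)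
    (h1 : p₂ < p₁) (h1' : p₁ < 1) :
    ConvLE (negBinomMeasure α p₁) (negBinomMeasure α p₂) := by
  have hp1 : 0 < p₁ := h2.trans h1
  have hp : 0 < p₂ / p₁ := div_pos h2 hp1
  have hplt : p₂ / p₁ < 1 := (div_lt_one hp1).2 h1
  have hr : ∀ n, 0 ≤ rr α (p₂ / p₁) p₁ n := fun n => by
    refine Finset.sum_nonneg fun x _ => ?_
    have e1 := mc_nonneg hα.le x.2
    have e2 := mc_nonneg (Nat.cast_nonneg x.2 : (0 : ℝ) ≤ x.2) x.1
    have e3 : 0 ≤ 1 - p₁ := by linarith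
    have e4 : 0 ≤ 1 - p₂ / p₁ := by linarith
    positivity
  have h0 : ∀ k, 0 ≤ negBinomPMF α p₁ k := fun k => by
    rw [pmf_eq hα]
    have := mc_nonneg hα.le k
    have : 0 ≤ 1 - p₁ := by linarith
    positivity
  have hc := conv_eq (negBinomPMF α p₁) (rr α (p₂ / p₁) p₁) (negBinomPMF α p₂) h0 hr
    (fun n => by rw [key hα hp hp1, div_mul_cancel₀ _ hp1.ne'])
  refine ⟨_, ⟨?_⟩, ?_, hc⟩
  · have hu := congrArg (fun m => ∫⁻ _, 1 ∂m) hc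
    have m1 := nb_prob hα h2 (h1.trans h1')
    have m2 := nb_prob hα hp1 h1'
    rw [negBinomMeasure] at m1 m2
    simp only [Measure.lintegral_conv measurable_const, lintegral_const, m1, m2, one_mul,
      mul_one] at hu
    exact hu.symm
  · rw [Measure.sum_apply _ measurableSet_Iio]
    simp [measurableSet_Iio]
end

section
/- Let α > 0 and suppose (p₁₁, p₁₂) is majorized by (p₂₁, p₂₂), with all four values in (0,1). Then N_{α,p₁₁} + N_{α,p₁₂} ≤_conv N_{α,p₂₁} + N_{α,p₂₂}, where summands are independent. -/
open MeasureTheory ProbabilityTheory Real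

theorem nb_pow_aux (a b c d : ℝ) (ha : 0 ≤ a) (hab : a ≤ b) (hac : a ≤ c) (hcd : c ≤ d)
    (hs : d - c = b - a) (n : ℕ) : b ^ n - a ^ n ≤ d ^ n - c ^ n := by
  induction n with
  | zero => simp
  | succ n ih =>
    have h1 : 0 ≤ b ^ n - a ^ n := sub_nonneg.2 (pow_le_pow_left₀ ha hab n)
    have h2 : a ^ n ≤ c ^ n := pow_le_pow_left₀ ha hac n
    have h3 : b ≤ d := by linarith
    have e1 : d ^ (n+1) - c ^ (n+1) = d * (d ^ n - c ^ n) + (b - a) * c ^ n := by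
      rw [← hs]; ring
    have e2 : b ^ (n+1) - a ^ (n+1) = b * (b ^ n - a ^ n) + (b - a) * a ^ n := by ring
    rw [e1, e2]
    have : 0 ≤ b - a := by linarith
    have : 0 ≤ d := by linarith
    gcongr

theorem nb_pow_le (a b c d : ℝ) (ha : 0 ≤ a) (hb : 0 ≤ b) (hc : 0 ≤ c) (hd : 0 ≤ d)
    (hs : a + b = c + d) (hm : min c d ≤ min a b) (n : ℕ) : a ^ n + b ^ n ≤ c ^ n + d ^ n := by
  have h1 : min c d ≤ a := hm.trans (min_le_left _ _)
  have h2 : min c d ≤ b := hm.trans (min_le_right _ _)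
  rcases le_total c d with h | h
  · rw [min_eq_left h] at h1 h2
    have := nb_pow_aux c a b d hc h1 h2 (by linarith) (by linarith) n
    linarith
  · rw [min_eq_right h] at h1 h2
    have := nb_pow_aux d a b c hd h1 h2 (by linarith) (by linarith) n
    linarith

theorem nb_gamma (α : ℝ) (hα : 0 < α) (k : ℕ) :
    Real.Gamma (k + α) / (Nat.factorial k * Real.Gamma α) = Ring.choose (α + k - 1) k := by
  have h1 := Ring.factorial_nsmul_multichoose_eq_ascPochhammer α k
  have h2 : Real.Gamma (k + α) = (ascPochhammer ℕ k).smeval α * Real.Gamma α := by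
    rw [Polynomial.ascPochhammer_smeval_eq_eval]
    clear h1
    induction k with
    | zero => simp
    | succ k ih =>
      rw [ascPochhammer_succ_eval]
      have : ((k + 1 : ℕ) : ℝ) + α = (k + α) + 1 := by push_cast; ring
      rw [this, Real.Gamma_add_one (by positivity), ih]; ring
  have h3 : Ring.choose (α + k - 1) k = Ring.multichoose α k := by
    rw [Ring.choose]; congr 1; ring
  rw [h2, h3, ← h1]
  have := (Real.Gamma_pos_of_pos hα).ne'
  have : (Nat.factorial k : ℝ) ≠ 0 := by positivity
  simp only [nsmul_eq_mul]
  field_simp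

theorem nb_hasSum (α p : ℝ) (hα : 0 < α) (hp : p ∈ Set.Ioo (0:ℝ) 1) :
    HasSum (negBinomPMF α p) 1 := by
  have h := (Real.one_div_one_sub_rpow_hasFPowerSeriesOnBall_zero α).hasSum (y := 1 - p) (by
    have : ‖(1 - p : ℝ)‖ < 1 := by
      rw [Real.norm_eq_abs, abs_lt]
      constructor <;> linarith [hp.1, hp.2]
    rw [Metric.mem_eball, edist_zero_right, ← ofReal_norm]
    simpa using this)
  have h' := h.mul_left (p ^ α)
  have h0 := (Real.rpow_pos_of_pos hp.1 α).ne'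
  have e1 : p ^ α * (1 / (1 - (0 + (1 - p))) ^ α) = 1 := by
    rw [zero_add, sub_sub_cancel]; field_simp
  rw [e1] at h'
  refine (congrArg (fun g => HasSum g (1:ℝ)) (funext fun k => ?_)).mp h'
  simp [negBinomPMF, nb_gamma α hα, FormalMultilinearSeries.ofScalars]
  ring

theorem nb_nonneg (α p : ℝ) (hα : 0 < α) (hp : p ∈ Set.Ioo (0:ℝ) 1) (k : ℕ) :
    0 ≤ negBinomPMF α p k := by
  have := Real.Gamma_pos_of_pos hα
  have := Real.Gamma_pos_of_pos (show 0 < k + α by positivity)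
  have := hp.1
  have : 0 < 1 - p := by linarith [hp.2]
  unfold negBinomPMF
  positivity

/-- Discrete measure with weights `a`. -/
noncomputable def nbD (a : ℕ → ℝ) : Measure ℝ :=
  Measure.sum fun k : ℕ => ENNReal.ofReal (a k) • Measure.dirac (k : ℝ)

instance (a : ℕ → ℝ) : SFinite (nbD a) := by unfold nbD; infer_instance

theorem nbD_lintegral (a : ℕ → ℝ) (f : ℝ → ENNReal) (hf : Measurable f) :
    ∫⁻ x, f x ∂(nbD a) = ∑' k : ℕ, ENNReal.ofReal (a k) * f k := by
  simp [nbD, lintegral_sum_measure, lintegral_smul_measure, lintegral_dirac' _ hf]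

theorem nbD_conv (a b : PowerSeries ℝ) (ha : ∀ k, 0 ≤ PowerSeries.coeff k a)
    (hb : ∀ k, 0 ≤ PowerSeries.coeff k b) :
    (nbD fun k => PowerSeries.coeff k a).conv (nbD fun k => PowerSeries.coeff k b)
      = nbD fun k => PowerSeries.coeff k (a * b) := by
  refine Measure.ext_of_lintegral _ fun f hf => ?_
  rw [Measure.lintegral_conv hf, nbD_lintegral _ _ hf, nbD_lintegral _ _ (by fun_prop)]
  have : ∀ i : ℕ, ∫⁻ y, f ((i:ℝ) + y) ∂(nbD fun k => PowerSeries.coeff k b)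
      = ∑' j : ℕ, ENNReal.ofReal (PowerSeries.coeff j b) * f ((i:ℝ) + j) :=
    fun i => nbD_lintegral _ _ (by fun_prop)
  simp_rw [this, ← ENNReal.tsum_mul_left]
  rw [← ENNReal.tsum_prod (f := fun i j : ℕ => ENNReal.ofReal (PowerSeries.coeff i a) *
    (ENNReal.ofReal (PowerSeries.coeff j b) * f ((i:ℝ) + j))),
    ← Finset.HasAntidiagonal.sigmaAntidiagonalEquivProd.tsum_eq, ENNReal.tsum_sigma']
  refine tsum_congr fun n => ?_
  rw [PowerSeries.coeff_mul, ENNReal.ofReal_sum_of_nonneg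
    (fun i _ => mul_nonneg (ha _) (hb _)), Finset.sum_mul, tsum_fintype,
    Finset.univ_eq_attach, ← Finset.sum_attach (Finset.HasAntidiagonal.antidiagonal n)]
  refine Finset.sum_congr rfl fun x _ => ?_
  have hx : x.1.1 + x.1.2 = n := Finset.HasAntidiagonal.mem_antidiagonal.1 x.2
  have hx' : (n : ℝ) = (x.1.1 : ℝ) + x.1.2 := by exact_mod_cast hx.symm
  rw [hx', ENNReal.ofReal_mul (ha _)]
  simp [mul_assoc]

theorem nbD_prob (α p : ℝ) (hα : 0 < α) (hp : p ∈ Set.Ioo (0:ℝ) 1) :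
    IsProbabilityMeasure (negBinomMeasure α p) := by
  have h := nb_hasSum α p hα hp
  constructor
  have := nbD_lintegral (negBinomPMF α p) (fun _ => 1) measurable_const
  rw [lintegral_one] at this
  change nbD (negBinomPMF α p) Set.univ = 1
  rw [this]
  simp only [mul_one]
  rw [← ENNReal.ofReal_tsum_of_nonneg (nb_nonneg α p hα hp) h.summable, h.tsum_eq]
  simp

section
open PowerSeries

/-- Generating series. -/
noncomputable def nbN (α p : ℝ) : PowerSeries ℝ := PowerSeries.mk (negBinomPMF α p)

/-- Log-derivative series. -/
noncomputable def nbH (p : ℝ) : PowerSeries ℝ := PowerSeries.mk fun k => (1 - p) ^ (k + 1)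

theorem nb_H (p : ℝ) : (1 - C (1 - p) * X) * nbH p = C (1 - p) := by
  ext n
  rw [sub_mul, one_mul, mul_assoc, map_sub, coeff_C_mul]
  cases n with
  | zero => simp [nbH]
  | succ n => rw [coeff_succ_X_mul]; simp [nbH, coeff_C]; ring

theorem nb_rec (α p : ℝ) (hα : 0 < α) (n : ℕ) :
    negBinomPMF α p (n + 1) * (n + 1) = (1 - p) * (n + α) * negBinomPMF α p n := by
  unfold negBinomPMF
  have h1 := (Real.Gamma_pos_of_pos hα).ne'
  have : (Nat.factorial n : ℝ) ≠ 0 := by positivity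
  have e : ((n + 1 : ℕ) : ℝ) + α = (n + α) + 1 := by push_cast; ring
  rw [e, Real.Gamma_add_one (by positivity), Nat.factorial_succ]
  push_cast
  field_simp
  ring

theorem nb_deriv (α p : ℝ) (hα : 0 < α) :
    d⁄dX ℝ (nbN α p) = C α * nbH p * nbN α p := by
  have hne : (1 - C (1 - p) * X : PowerSeries ℝ) ≠ 0 := by
    intro h
    have := congrArg (coeff 0) h
    simp at this
  apply mul_left_cancel₀ hne
  have : (1 - C (1 - p) * X) * (C α * nbH p * nbN α p) = C (α * (1 - p)) * nbN α p := by
    rw [map_mul]; linear_combination C α * nbN α p * nb_H p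
  rw [this]
  ext n
  rw [sub_mul, one_mul, mul_assoc, map_sub, coeff_C_mul, coeff_C_mul, coeff_derivative]
  have hr := nb_rec α p hα n
  cases n with
  | zero => simp [nbN] at hr ⊢; linarith
  | succ n =>
    rw [coeff_succ_X_mul, coeff_derivative]
    simp [nbN] at hr ⊢
    linarith

end

/-- Convolution order under majorization of the success probabilities, common shape. -/
theorem negBinom_majorize_prob_conv_order (α p₁₁ p₁₂ p₂₁ p₂₂ : ℝ) (hα : 0 < α)
    (h11 : p₁₁ ∈ Set.Ioo (0:ℝ) 1) (h12 : p₁₂ ∈ Set.Ioo (0:ℝ) 1)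
    (h21 : p₂₁ ∈ Set.Ioo (0:ℝ) 1) (h22 : p₂₂ ∈ Set.Ioo (0:ℝ) 1)
    (hsum : p₁₁ + p₁₂ = p₂₁ + p₂₂) (hmax : max p₁₁ p₁₂ ≤ max p₂₁ p₂₂) :
    ConvLE ((negBinomMeasure α p₁₁).conv (negBinomMeasure α p₁₂))
      ((negBinomMeasure α p₂₁).conv (negBinomMeasure α p₂₂)) := by
  classical
  have hN0 : ∀ p, p ∈ Set.Ioo (0:ℝ) 1 → 0 < PowerSeries.coeff 0 (nbN α p) := by
    intro p hp
    have := Real.rpow_pos_of_pos hp.1 α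
    have := (Real.Gamma_pos_of_pos hα).ne'
    simp only [nbN, PowerSeries.coeff_mk, negBinomPMF]
    simpa [this]
  have hNn : ∀ p, p ∈ Set.Ioo (0:ℝ) 1 → ∀ k, 0 ≤ PowerSeries.coeff k (nbN α p) := by
    intro p hp k
    simpa [nbN] using nb_nonneg α p hα hp k
  have hNm : ∀ p, negBinomMeasure α p = nbD fun k => PowerSeries.coeff k (nbN α p) := by
    intro p; simp [nbN, nbD, negBinomMeasure]
  set A := nbN α p₁₁ * nbN α p₁₂ with hA
  set B := nbN α p₂₁ * nbN α p₂₂ with hB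
  have hmn : ∀ a b : PowerSeries ℝ, (∀ k, 0 ≤ PowerSeries.coeff k a) →
      (∀ k, 0 ≤ PowerSeries.coeff k b) → ∀ k, 0 ≤ PowerSeries.coeff k (a * b) := by
    intro a b ha hb k
    rw [PowerSeries.coeff_mul]
    exact Finset.sum_nonneg fun i _ => mul_nonneg (ha _) (hb _)
  have hA0 : 0 < PowerSeries.constantCoeff A := by
    have h1 := hN0 _ h11
    have h2 := hN0 _ h12
    simp only [PowerSeries.coeff_zero_eq_constantCoeff] at h1 h2
    rw [hA, map_mul]; exact mul_pos h1 h2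
  have hB0 : 0 < PowerSeries.constantCoeff B := by
    have h1 := hN0 _ h21
    have h2 := hN0 _ h22
    simp only [PowerSeries.coeff_zero_eq_constantCoeff] at h1 h2
    rw [hB, map_mul]; exact mul_pos h1 h2
  have hAne : A ≠ 0 := by rintro h; rw [h] at hA0; simp at hA0
  set f := B * A⁻¹ with hf
  have hfA : A * f = B := by
    rw [hf, mul_left_comm, PowerSeries.mul_inv_cancel _ hA0.ne', mul_one]
  have hf0 : 0 < PowerSeries.constantCoeff f := by
    have : 0 < PowerSeries.constantCoeff A * PowerSeries.constantCoeff f := by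
      rw [← map_mul, hfA]; exact hB0
    exact pos_of_mul_pos_right this hA0.le
  set H := nbH p₂₁ + nbH p₂₂ - nbH p₁₁ - nbH p₁₂ with hH
  have hHn : ∀ k, 0 ≤ PowerSeries.coeff k H := by
    intro k
    have := nb_pow_le (1 - p₁₁) (1 - p₁₂) (1 - p₂₁) (1 - p₂₂) (by linarith [h11.2])
      (by linarith [h12.2]) (by linarith [h21.2]) (by linarith [h22.2]) (by linarith)
      (by
        rw [min_sub_sub_left, min_sub_sub_left]; linarith) (k + 1)
    simp only [hH, nbH, map_sub, map_add, PowerSeries.coeff_mk]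
    linarith
  have hfd : PowerSeries.derivative ℝ f = PowerSeries.C α * (H * f) := by
    apply mul_left_cancel₀ hAne
    have h1 := congrArg (PowerSeries.derivative ℝ) hfA
    have h2 : PowerSeries.derivative ℝ A
        = PowerSeries.C α * (nbH p₁₁ + nbH p₁₂) * A := by
      rw [hA, Derivation.leibniz, nb_deriv α _ hα, nb_deriv α _ hα]
      simp only [smul_eq_mul]; ring
    have h3 : PowerSeries.derivative ℝ B
        = PowerSeries.C α * (nbH p₂₁ + nbH p₂₂) * B := by
      rw [hB, Derivation.leibniz, nb_deriv α _ hα, nb_deriv α _ hα]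
      simp only [smul_eq_mul]; ring
    rw [Derivation.leibniz, h2, h3, ← hfA] at h1
    simp only [smul_eq_mul] at h1
    rw [hH]
    linear_combination h1
  clear_value f H
  have hfn : ∀ k, 0 ≤ PowerSeries.coeff k f := by
    intro k
    induction k using Nat.strong_induction_on with
    | _ k ih =>
      cases k with
      | zero => rw [PowerSeries.coeff_zero_eq_constantCoeff]; exact hf0.le
      | succ n =>
        have h1 := congrArg (PowerSeries.coeff n) hfd
        rw [PowerSeries.coeff_derivative, PowerSeries.coeff_C_mul, PowerSeries.coeff_mul n H f] at h1
        have h2 : 0 ≤ PowerSeries.coeff (n + 1) f * ((n : ℝ) + 1) := by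
          rw [h1]
          refine mul_nonneg hα.le (Finset.sum_nonneg fun i hi => mul_nonneg (hHn _) (ih _ ?_))
          have := Finset.HasAntidiagonal.mem_antidiagonal.1 hi
          omega
        exact nonneg_of_mul_nonneg_left h2 (by positivity)
  have e1 : (negBinomMeasure α p₁₁).conv (negBinomMeasure α p₁₂)
      = nbD fun k => PowerSeries.coeff k A := by
    rw [hNm, hNm, nbD_conv _ _ (hNn _ h11) (hNn _ h12)]
  have e2 : (negBinomMeasure α p₂₁).conv (negBinomMeasure α p₂₂)
      = nbD fun k => PowerSeries.coeff k B := by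
    rw [hNm, hNm, nbD_conv _ _ (hNn _ h21) (hNn _ h22)]
  have := nbD_prob α _ hα h11
  have := nbD_prob α _ hα h12
  have := nbD_prob α _ hα h21
  have := nbD_prob α _ hα h22
  have P1 : IsProbabilityMeasure (nbD fun k => PowerSeries.coeff k A) := by
    rw [← e1]; infer_instance
  have P2 : IsProbabilityMeasure (nbD fun k => PowerSeries.coeff k B) := by
    rw [← e2]; infer_instance
  have e3 : (nbD fun k => PowerSeries.coeff k B)
      = (nbD fun k => PowerSeries.coeff k A).conv (nbD fun k => PowerSeries.coeff k f) := by
    rw [nbD_conv _ _ (hmn _ _ (hNn _ h11) (hNn _ h12)) hfn, hfA]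
  refine ⟨nbD fun k => PowerSeries.coeff k f, ⟨?_⟩, ?_, ?_⟩
  · have h1 := P2.measure_univ
    rw [e3, ← lintegral_one, Measure.lintegral_conv measurable_const] at h1
    simpa using h1
  · rw [nbD, Measure.sum_apply _ measurableSet_Iio]
    simp
  · rw [e1, e2, e3]
end

section
/- Let G₁ = Σᵢ G_{α_{1i}, β_{1i}} and G₂ = Σᵢ G_{α_{2i}, β_{2i}} be convolutions of independent gamma random variables. If (α⃗₁, β⃗₁) ≥ᵃ (α⃗₂, β⃗₂) in the arrangement order, then G₁ ≤_conv G₂. In particular, for n = 2, if α₁ < α₂ and β₁ > β₂, then G_{α₂,β₁} + G_{α₁,β₂} ≤_conv G_{α₁,β₁} + G_{α₂,β₂}. -/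
open MeasureTheory ProbabilityTheory Real

/-- The law of the sum of independent coordinates. -/
noncomputable def convSum {n : ℕ} (μ : Fin n → Measure ℝ) : Measure ℝ :=
  (Measure.pi μ).map fun x => ∑ i, x i

open scoped ENNReal

lemma aux_measurable_gammaPDF (a r : ℝ) : Measurable (gammaPDF a r) :=
  (measurable_gammaPDFReal a r).ennreal_ofReal

lemma aux_lintegral_scale (f : ℝ → ℝ≥0∞) (hf : Measurable f) {x : ℝ} (hx : 0 < x) :
    ∫⁻ y, f y = ENNReal.ofReal x * ∫⁻ u, f (x * u) := by
  have h := Real.smul_map_volume_mul_left hx.ne'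
  conv_lhs => rw [← h]
  rw [lintegral_smul_measure, lintegral_map hf (by fun_prop), abs_of_pos hx]
  rfl

lemma aux_pointwise {a b r x u : ℝ} (ha : 0 < a) (hb : 0 < b) (hr : 0 < r) (hx : 0 < x)
    (h0 : u ≠ 0) (h1 : u ≠ 1) :
    gammaPDF a r (x * u) * gammaPDF b r (-(x * u) + x) =
      ENNReal.ofReal x⁻¹ * gammaPDF (a + b) r x * betaPDF a b u := by
  rcases lt_or_gt_of_ne h0 with hu | hu
  · rw [gammaPDF_of_neg (mul_neg_of_pos_of_neg hx hu), betaPDF_eq_zero_of_nonpos hu.le]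
    simp
  rcases lt_or_gt_of_ne h1 with hu1 | hu1
  · have e : -(x * u) + x = x * (1 - u) := by ring
    have h1u : 0 < 1 - u := by linarith
    rw [e, gammaPDF_of_nonneg (by positivity), gammaPDF_of_nonneg (by positivity),
      gammaPDF_of_nonneg hx.le, betaPDF_of_pos_lt_one hu hu1,
      ← ENNReal.ofReal_mul (by positivity), ← ENNReal.ofReal_mul (by positivity),
      ← ENNReal.ofReal_mul (by positivity)]
    congr 1
    have e1 : x ^ (a + b - 1) = x ^ (a - 1) * x ^ (b - 1) * x := by
      rw [← Real.rpow_add hx, ← Real.rpow_add_one hx.ne']; ring_nf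
    have e2 : rexp (-(r * x)) = rexp (-(r * (x * u))) * rexp (-(r * (x * (1 - u)))) := by
      rw [← Real.exp_add]; ring_nf
    rw [Real.mul_rpow hx.le hu.le, Real.mul_rpow hx.le h1u.le, Real.rpow_add hr, beta, e1, e2]
    have := (Real.Gamma_pos_of_pos ha).ne'
    have := (Real.Gamma_pos_of_pos hb).ne'
    have := (Real.Gamma_pos_of_pos (add_pos ha hb)).ne'
    field_simp
  · rw [betaPDF_eq_zero_of_one_le hu1.le, gammaPDF_of_neg (x := -(x * u) + x) (by nlinarith)]
    simp

lemma aux_gamma_conv {a b r : ℝ} (ha : 0 < a) (hb : 0 < b) (hr : 0 < r) :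
    (gammaMeasure a r).conv (gammaMeasure b r) = gammaMeasure (a + b) r := by
  unfold gammaMeasure
  rw [conv_withDensity_eq_lconvolution (aux_measurable_gammaPDF a r) (aux_measurable_gammaPDF b r)]
  apply withDensity_congr_ae
  have hne : ∀ c : ℝ, ∀ᵐ x : ℝ, x ≠ c := fun c => by
    simp [ae_iff]
  filter_upwards [hne 0] with x hx
  rw [lconvolution_def]
  rcases lt_or_gt_of_ne hx with hx | hx
  · rw [gammaPDF_of_neg hx]
    rw [lintegral_eq_zero_iff (by
      have := aux_measurable_gammaPDF a r
      have := aux_measurable_gammaPDF b r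
      fun_prop)]
    refine Filter.Eventually.of_forall fun y => ?_
    rcases lt_or_ge y 0 with hy | hy
    · simp [gammaPDF_of_neg hy]
    · simp [gammaPDF_of_neg (show -y + x < 0 by linarith)]
  · rw [aux_lintegral_scale _ (by
      have := aux_measurable_gammaPDF a r
      have := aux_measurable_gammaPDF b r
      fun_prop) hx]
    have : ∫⁻ u, gammaPDF a r (x * u) * gammaPDF b r (-(x * u) + x) =
        ∫⁻ u, ENNReal.ofReal x⁻¹ * gammaPDF (a + b) r x * betaPDF a b u := by
      apply lintegral_congr_ae
      filter_upwards [hne 0, hne 1] with u h0 h1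
      exact aux_pointwise ha hb hr hx h0 h1
    rw [this, lintegral_const_mul _ (show Measurable (betaPDF a b) from (measurable_betaPDFReal a b).ennreal_ofReal),
      lintegral_betaPDF_eq_one ha hb, mul_one, ← mul_assoc, ← ENNReal.ofReal_mul hx.le,
      mul_inv_cancel₀ hx.ne']
    simp

/-- Gamma law with integer shape, with shape `0` being the point mass at the origin. -/
noncomputable def auxErlang (r : ℝ) (k : ℕ) : Measure ℝ :=
  if k = 0 then Measure.dirac 0 else gammaMeasure k r

/-- The compound negative binomial law. -/
noncomputable def auxRho (d p r : ℝ) : Measure ℝ :=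
  Measure.sum fun k : ℕ => ENNReal.ofReal (negBinomPMF d p k) • auxErlang r k

lemma auxErlang_prob {r : ℝ} (hr : 0 < r) (k : ℕ) : IsProbabilityMeasure (auxErlang r k) := by
  unfold auxErlang
  split_ifs with h
  · infer_instance
  · exact isProbabilityMeasure_gammaMeasure (by positivity) hr

lemma auxErlang_neg {r : ℝ} (k : ℕ) : auxErlang r k (Set.Iio 0) = 0 := by
  unfold auxErlang
  split_ifs with h
  · simp
  · rw [gammaMeasure, withDensity_apply _ measurableSet_Iio]
    exact lintegral_gammaPDF_of_nonpos le_rfl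

lemma aux_conv_erlang {d r : ℝ} (hd : 0 < d) (hr : 0 < r) (k : ℕ) :
    (gammaMeasure d r).conv (auxErlang r k) = gammaMeasure (d + k) r := by
  have := isProbabilityMeasure_gammaMeasure hd hr
  unfold auxErlang
  split_ifs with h
  · subst h
    simp
  · exact aux_gamma_conv hd (by positivity) hr

lemma aux_mixture {d r s : ℝ} (hd : 0 < d) (hs : 0 < s) (hsr : s < r) (x : ℝ) (hx : 0 < x) :
    gammaPDF d s x = ∑' k : ℕ, ENNReal.ofReal (negBinomPMF d (s / r) k) * gammaPDF (d + k) r x := by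
  have hr : 0 < r := hs.trans hsr
  have hp : 0 < 1 - s / r := by rw [sub_pos, div_lt_one hr]; exact hsr
  have hterm : ∀ k : ℕ, negBinomPMF d (s / r) k * gammaPDFReal (d + k) r x =
      (s ^ d / Real.Gamma d * x ^ (d - 1) * rexp (-(r * x))) *
        (((r - s) * x) ^ k / (Nat.factorial k)) := by
    intro k
    have h1 := (Real.Gamma_pos_of_pos hd).ne'
    have h2 := (Real.Gamma_pos_of_pos (show 0 < d + k by positivity)).ne'
    have e1 : x ^ (d + k - 1) = x ^ (d - 1) * x ^ k := by
      rw [← Real.rpow_natCast, ← Real.rpow_add hx]; ring_nf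
    have e2 : (1 - s / r) ^ k = (r - s) ^ k / r ^ k := by
      rw [← div_pow]; congr 1; field_simp
    rw [negBinomPMF, gammaPDFReal, if_pos hx.le, e1, e2, Real.rpow_add hr, Real.rpow_natCast,
      Real.div_rpow hs.le hr.le, mul_pow, add_comm (k : ℝ) d]
    field_simp
  have hnn : ∀ k : ℕ, 0 ≤ negBinomPMF d (s / r) k := by
    intro k
    have h2 := (Real.Gamma_pos_of_pos (show 0 < (k : ℝ) + d by positivity))
    unfold negBinomPMF
    positivity
  have hsum : HasSum (fun k : ℕ => ((r - s) * x) ^ k / (Nat.factorial k : ℝ))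
      (rexp ((r - s) * x)) := by
    rw [Real.exp_eq_exp_ℝ]
    exact NormedSpace.expSeries_div_hasSum_exp ((r - s) * x)
  have hS := hsum.mul_left (s ^ d / Real.Gamma d * x ^ (d - 1) * rexp (-(r * x)))
  simp_rw [gammaPDF, ← ENNReal.ofReal_mul (hnn _), hterm]
  rw [← ENNReal.ofReal_tsum_of_nonneg _ hS.summable, hS.tsum_eq, gammaPDFReal, if_pos hx.le,
    mul_assoc _ (rexp _), ← Real.exp_add]
  · ring_nf
  · intro k
    have : 0 < r - s := by linarith
    positivity

lemma aux_conv_rho {d r s : ℝ} (hd : 0 < d) (hs : 0 < s) (hsr : s < r) :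
    gammaMeasure d s = (gammaMeasure d r).conv (auxRho d (s / r) r) := by
  have hr : 0 < r := hs.trans hsr
  have := isProbabilityMeasure_gammaMeasure hd hr
  have := fun k => auxErlang_prob hr k
  have h : (gammaMeasure d r).conv (auxRho d (s / r) r) =
      Measure.sum fun k : ℕ => ENNReal.ofReal (negBinomPMF d (s / r) k) •
        gammaMeasure (d + k) r := by
    simp_rw [← aux_conv_erlang hd hr, ← Measure.conv_smul_right]
    unfold auxRho Measure.conv
    rw [Measure.prod_sum_right, Measure.map_sum (by fun_prop)]
  rw [h]
  unfold gammaMeasure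
  simp_rw [← withDensity_smul _ (aux_measurable_gammaPDF _ _)]
  rw [← withDensity_tsum (fun k => (aux_measurable_gammaPDF _ _).const_smul _)]
  apply withDensity_congr_ae
  have hne : ∀ᵐ x : ℝ, x ≠ 0 := by simp [ae_iff]
  filter_upwards [hne] with x hx
  rw [tsum_apply (Pi.summable.2 fun _ => ENNReal.summable)]
  rcases lt_or_gt_of_ne hx with hx | hx
  · simp [gammaPDF_of_neg hx]
  · simpa using aux_mixture hd hs hsr x hx

theorem gamma_arrangement_conv_order {n : ℕ} (α β : Fin n → ℝ)
    (hα : ∀ k, 0 < α k) (hβ : ∀ k, 0 < β k) (i j : Fin n)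
    (hij : α i < α j) (hba : β j < β i) :
    ConvLE (convSum fun k => gammaMeasure (α (Equiv.swap i j k)) (β k))
      (convSum fun k => gammaMeasure (α k) (β k)) := by
  have hd : 0 < α j - α i := sub_pos.2 hij
  have hc := aux_conv_rho hd (hβ j) hba
  have hne : i ≠ j := by rintro rfl; exact lt_irrefl _ hij
  set ρ := auxRho (α j - α i) (β j / β i) (β i) with hρ
  have P := fun {a r : ℝ} (ha : 0 < a) (hr : 0 < r) => isProbabilityMeasure_gammaMeasure ha hr
  have := P hd (hβ i)
  have := P hd (hβ j)
  have := fun k => auxErlang_prob (hβ i) k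
  have : SFinite ρ := by rw [hρ]; unfold auxRho; infer_instance
  have hprob : IsProbabilityMeasure ρ := by
    constructor
    have h1 : gammaMeasure (α j - α i) (β j) Set.univ = 1 := measure_univ
    rw [hc, Measure.conv, Measure.map_apply (by fun_prop) MeasurableSet.univ, Set.preimage_univ,
      ← Set.univ_prod_univ, Measure.prod_prod, measure_univ, one_mul] at h1
    exact h1
  refine ⟨ρ, hprob, ?_, ?_⟩
  · rw [hρ, auxRho, Measure.sum_apply _ measurableSet_Iio]
    simp [auxErlang_neg]
  have I1 := fun k => P (hα (Equiv.swap i j k)) (hβ k)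
  have I2 := fun k => P (hα k) (hβ k)
  have key : ∀ r, 0 < r → ∀ t, charFun (gammaMeasure (α j) r) t =
      charFun (gammaMeasure (α i) r) t * charFun (gammaMeasure (α j - α i) r) t := by
    intro r hr t
    have := P (hα i) hr
    have := P hd hr
    rw [← charFun_conv, aux_gamma_conv (hα i) hd hr]
    congr 2; ring
  have M : Measurable fun x : Fin n → ℝ => ∑ k, x k := by fun_prop
  have : IsProbabilityMeasure (convSum fun k => gammaMeasure (α (Equiv.swap i j k)) (β k)) :=
    Measure.isProbabilityMeasure_map M.aemeasurable
  have : IsProbabilityMeasure (convSum fun k => gammaMeasure (α k) (β k)) :=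
    Measure.isProbabilityMeasure_map M.aemeasurable
  apply Measure.ext_of_charFun
  ext t
  rw [charFun_conv]
  unfold convSum
  rw [charFun_map_sum_pi_eq_prod, charFun_map_sum_pi_eq_prod, Finset.prod_apply, Finset.prod_apply]
  have hji : j ∈ Finset.univ.erase i := by simp [hne.symm]
  rw [← Finset.mul_prod_erase _ _ (Finset.mem_univ i), ← Finset.mul_prod_erase _ _ hji,
    ← Finset.mul_prod_erase Finset.univ
      (fun k => charFun (gammaMeasure (α (Equiv.swap i j k)) (β k)) t) (Finset.mem_univ i),
    ← Finset.mul_prod_erase _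
      (fun k => charFun (gammaMeasure (α (Equiv.swap i j k)) (β k)) t) hji]
  have hrest : ∏ k ∈ (Finset.univ.erase i).erase j,
      charFun (gammaMeasure (α (Equiv.swap i j k)) (β k)) t =
      ∏ k ∈ (Finset.univ.erase i).erase j, charFun (gammaMeasure (α k) (β k)) t := by
    apply Finset.prod_congr rfl
    intro k hk
    simp only [Finset.mem_erase, Finset.mem_univ, and_true] at hk
    rw [Equiv.swap_apply_of_ne_of_ne hk.2 hk.1]
  rw [hrest, Equiv.swap_apply_left, Equiv.swap_apply_right, key _ (hβ i), key _ (hβ j), hc,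
    charFun_conv]
  ring
end
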